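/- Let p be a prime, n ≥ 1, R = ZMod (p^n), and let d0 be a fixed zero divisor of R. Suppose the pair (v1, v2) of vectors in ι → R satisfies the column conditions (C1), (C2), (C3), (C4), satisfies (C5) for every zero divisor d ≠ d0, but contains no unit multiple of the column (d0, 1), i.e. there is no index i and unit w of R with v1 i = w * d0 and v2 i = w. Then the code M generated by v1 and v2 is not minimal: there exist codewords w, w' ∈ M with w' ≠ 0, supp(w') ⊆ supp(w), and w' ≠ a • w for every a ∈ R. -/

import Mathlib

/-!
The codeword `w = v1 - d0 • v2` can vanish only at columns `(d0 * y, y)`, and since unit multiples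
of `(d0, 1)` are absent, `y` is then a non-unit, hence killed by the socle generator `p ^ (n - 1)`.
So `w' = v1 + (p ^ (n - 1) - d0) • v2` vanishes wherever `w` does. The columns `(1, 0)` and
`(0, 1)` show that `w'` is nonzero and that `w' = a • w` would force `a = 1` and `p ^ (n - 1) = 0`.
-/

lemma prime_pow_pred_ne_zero {p n : ℕ} (hp : p.Prime) (hn : 1 ≤ n) :
    (p : ZMod (p ^ n)) ^ (n - 1) ≠ 0 := by
  rw [← Nat.cast_pow, Ne, ZMod.natCast_eq_zero_iff, Nat.pow_dvd_pow_iff_le_right hp.one_lt]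
  omega

lemma prime_pow_pred_mul_eq_zero {p n : ℕ} (hp : p.Prime) (hn : 1 ≤ n)
    {y : ZMod (p ^ n)} (hy : ¬ IsUnit y) : (p : ZMod (p ^ n)) ^ (n - 1) * y = 0 := by
  have : NeZero (p ^ n) := ⟨(pow_pos hp.pos n).ne'⟩
  obtain ⟨k, rfl⟩ : ∃ k : ℕ, (k : ZMod (p ^ n)) = y := ⟨y.val, ZMod.natCast_zmod_val y⟩
  have hk : p ∣ k := by
    by_contra h
    exact hy ((ZMod.isUnit_iff_coprime k (p ^ n)).2
      (((hp.coprime_iff_not_dvd.2 h).symm).pow_right n))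
  obtain ⟨m, rfl⟩ := hk
  rw [← Nat.cast_pow, ← Nat.cast_mul, ZMod.natCast_eq_zero_iff, ← mul_assoc, ← pow_succ,
    Nat.sub_add_cancel hn]
  exact dvd_mul_right _ _

/-- If (C1), (C2), (C3), (C4) hold, (C5) holds for every zero divisor
`d ≠ d0`, but no unit multiple of the column `(d0, 1)` is present, then the code
generated by `v1, v2` is not minimal. -/
theorem not_minimal_without_Dstar_column {ι : Type*} [Fintype ι] (p n : ℕ)
    (hp : p.Prime) (hn : 1 ≤ n)
    (d0 : ZMod (p ^ n)) (hd0 : d0 ≠ 0 ∧ ¬ IsUnit d0)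
    (v1 v2 : ι → ZMod (p ^ n))
    (hC1 : ∃ i, v1 i = 1 ∧ v2 i = 0)
    (hC2 : ∃ i, v1 i = 0 ∧ v2 i = 1)
    (hC3 : ∀ u : ZMod (p ^ n), IsUnit u → ∃ i, v1 i = 1 ∧ v2 i = u)
    (hC4 : ∀ d : ZMod (p ^ n), d ≠ 0 → ¬ IsUnit d → ∃ i, v1 i = 1 ∧ v2 i = d)
    (hC5 : ∀ d : ZMod (p ^ n), d ≠ 0 → ¬ IsUnit d → d ≠ d0 → ∃ i, v1 i = d ∧ v2 i = 1)
    (hno : ¬ ∃ i, ∃ w : ZMod (p ^ n), IsUnit w ∧ v1 i = w * d0 ∧ v2 i = w) :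
    ∃ c1 c2 c1' c2' : ZMod (p ^ n),
      c1' • v1 + c2' • v2 ≠ 0 ∧
      {i | (c1' • v1 + c2' • v2) i ≠ 0} ⊆ {i | (c1 • v1 + c2 • v2) i ≠ 0} ∧
      ∀ a : ZMod (p ^ n), c1' • v1 + c2' • v2 ≠ a • (c1 • v1 + c2 • v2) := by
  obtain ⟨i, hi1, hi2⟩ := hC1
  obtain ⟨j, hj1, hj2⟩ := hC2
  have : Nontrivial (ZMod (p ^ n)) := ⟨d0, 0, hd0.1⟩
  refine ⟨1, -d0, 1, (p : ZMod (p ^ n)) ^ (n - 1) - d0, ?_, ?_, ?_⟩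
  · intro h
    have := congrFun h i
    simp [hi1, hi2] at this
  · intro k hk' hk
    apply hk'
    simp only [Pi.add_apply, Pi.smul_apply, smul_eq_mul, one_mul] at hk ⊢
    have hy : ¬ IsUnit (v2 k) := fun hu =>
      hno ⟨k, v2 k, hu, by linear_combination hk, rfl⟩
    linear_combination hk + prime_pow_pred_mul_eq_zero hp hn hy
  · intro a h
    have h1 := congrFun h i
    have h2 := congrFun h j
    simp only [Pi.add_apply, Pi.smul_apply, smul_eq_mul, hi1, hi2, hj1, hj2] at h1 h2
    exact prime_pow_pred_ne_zero hp hn (by linear_combination h2 + d0 * h1)
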